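/- arXiv:2007.10746 — 6 statements merged into one kernel-verified Lean document; each statement's English description precedes it below -/
import Mathlib

section
/- Let G be a simple graph on vertex set {1,…,n}. Then the supremum of Σ_{i=1}^n X_{ii} over all complex positive semidefinite (n+1)×(n+1) matrices X (indexed by {0,1,…,n}) satisfying X_{00} = 1, X_{ii} = X_{0i} for all i ∈ {1,…,n}, X_{ij} = 0 whenever i and j are adjacent in G, and rank(X) ≤ 2, equals the independence number α(G). In particular, there is a feasible X of rank at most 2 attaining the value α(G), and every such feasible X of rank at most 2 satisfies Σ_{i=1}^n X_{ii} ≤ α(G). -/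
/-!
A feasible `X` of rank at most two is the Gram matrix of vectors `v₀, …, vₙ` in `ℂ²`
(`exists_gram`). Write `xᵢ = Xᵢᵢ`. Adjacent vertices have orthogonal vectors, so expanding
`‖v₀ - vᵢ - vⱼ‖² ≥ 0` gives `xᵢ + xⱼ ≤ 1` along edges. In `ℂ²` orthogonal lines have antipodal
Bloch vectors, so the sign of the Bloch vector (`BlochPos`) is a proper two-colouring of the
subgraph of vertices with `vᵢ ≠ 0`. It remains to round a fractional solution of a bipartite
graph (`sum_le_of_coloring`): for a threshold `θ ∈ (0, 1]` the vertices of the first colour with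
`θ ≤ xᵢ` and those of the second colour with `1 - θ < xᵢ` form an independent set, whose size
averages to `∑ xᵢ` over `θ`.

Conversely, if `u` is the indicator vector of a maximum independent set with an extra
coordinate `u₀ = 1`, then `u uᴴ` is feasible, has rank one, and has value `α(G)`.
-/

open scoped ComplexOrder

/-- The independence number of a finite simple graph. -/
noncomputable def indepNum {V : Type*} [Fintype V] (G : SimpleGraph V) : ℕ :=
  sSup {m | ∃ s : Finset V, s.card = m ∧ ∀ i ∈ s, ∀ j ∈ s, ¬ G.Adj i j}

lemma indepNum_set_bddAbove {V : Type*} [Fintype V] (G : SimpleGraph V) :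
    BddAbove {m | ∃ s : Finset V, s.card = m ∧ ∀ i ∈ s, ∀ j ∈ s, ¬ G.Adj i j} :=
  ⟨Fintype.card V, by rintro _ ⟨s, rfl, -⟩; exact s.card_le_univ⟩

lemma card_le_indepNum {V : Type*} [Fintype V] (G : SimpleGraph V) (s : Finset V)
    (hs : ∀ i ∈ s, ∀ j ∈ s, ¬ G.Adj i j) : s.card ≤ indepNum G :=
  le_csSup (indepNum_set_bddAbove G) ⟨s, rfl, hs⟩

lemma exists_card_eq_indepNum {V : Type*} [Fintype V] (G : SimpleGraph V) :
    ∃ s : Finset V, s.card = indepNum G ∧ ∀ i ∈ s, ∀ j ∈ s, ¬ G.Adj i j :=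
  Nat.sSup_mem (s := {m | ∃ s : Finset V, s.card = m ∧ ∀ i ∈ s, ∀ j ∈ s, ¬ G.Adj i j})
    ⟨0, ∅, by simp⟩ (indepNum_set_bddAbove G)

/-- Threshold rounding: a fractional solution of the edge constraints whose support is properly
two-coloured by `c` has value at most the independence number. -/
lemma sum_le_of_coloring {V : Type*} [Fintype V] (G : SimpleGraph V) (x : V → ℝ) (c : V → Prop)
    (h0 : ∀ i, 0 ≤ x i) (h1 : ∀ i, x i ≤ 1) (hadj : ∀ i j, G.Adj i j → x i + x j ≤ 1)
    (hc : ∀ i j, G.Adj i j → 0 < x i → 0 < x j → (c i ↔ ¬ c j)) :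
    ∑ i, x i ≤ indepNum G := by
  classical
  -- `T i` is the set of thresholds at which the vertex `i` is selected.
  let T : V → Set ℝ := fun i => if c i then Set.Ioc 0 (x i) else Set.Ioc (1 - x i) 1
  have hTm : ∀ i, MeasurableSet (T i) := by
    intro i; dsimp only [T]; split_ifs <;> exact measurableSet_Ioc
  have hTs : ∀ i, T i ⊆ Set.Ioc 0 1 := by
    intro i
    dsimp only [T]
    split_ifs
    · exact Set.Ioc_subset_Ioc_right (h1 i)
    · exact Set.Ioc_subset_Ioc_left (by linarith [h1 i])
  have hTv : ∀ i, MeasureTheory.volume.real (T i) = x i := by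
    intro i
    dsimp only [T]
    split_ifs <;> simp [h0 i]
  have hTint : ∀ i, ∫ θ in Set.Ioc (0:ℝ) 1, (T i).indicator (fun _ => (1:ℝ)) θ = x i := by
    intro i
    rw [MeasureTheory.setIntegral_indicator (hTm i), Set.inter_eq_right.mpr (hTs i)]
    simp [hTv i]
  have hTintegrable : ∀ i, MeasureTheory.Integrable ((T i).indicator (fun _ => (1:ℝ)))
      (MeasureTheory.volume.restrict (Set.Ioc (0:ℝ) 1)) := fun i =>
    (MeasureTheory.integrable_const 1).indicator (hTm i)
  have hcard : ∀ θ ∈ Set.Ioc (0:ℝ) 1,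
      ∑ i, (T i).indicator (fun _ => (1:ℝ)) θ ≤ indepNum G := by
    intro θ hθ
    have hsum : ∑ i, (T i).indicator (fun _ => (1:ℝ)) θ
        = ((Finset.univ.filter fun i => θ ∈ T i).card : ℝ) := by
      simp [Set.indicator_apply]
    rw [hsum]
    refine Nat.cast_le.mpr (card_le_indepNum G _ ?_)
    have hpos : ∀ i, θ ∈ T i → 0 < x i := by
      intro i hi
      dsimp only [T] at hi
      split_ifs at hi
      · exact hi.1.trans_le hi.2
      · linarith [hi.1, hi.2]
    intro i hi j hj hij
    simp only [Finset.mem_filter, Finset.mem_univ, true_and] at hi hj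
    have hcol := hc i j hij (hpos i hi) (hpos j hj)
    have hle := hadj i j hij
    dsimp only [T] at hi hj
    by_cases hci : c i
    · rw [if_pos hci] at hi
      rw [if_neg (hcol.mp hci)] at hj
      linarith [hi.2, hj.1]
    · have hcj : c j := by tauto
      rw [if_neg hci] at hi
      rw [if_pos hcj] at hj
      linarith [hi.1, hj.2]
  calc ∑ i, x i = ∫ θ in Set.Ioc (0:ℝ) 1, ∑ i, (T i).indicator (fun _ => (1:ℝ)) θ := by
        rw [MeasureTheory.integral_finsetSum _ fun i _ => hTintegrable i]
        exact Finset.sum_congr rfl fun i _ => (hTint i).symm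
    _ ≤ ∫ _ in Set.Ioc (0:ℝ) 1, (indepNum G : ℝ) :=
        MeasureTheory.setIntegral_mono_on
          (MeasureTheory.integrable_finsetSum _ fun i _ => hTintegrable i)
          (MeasureTheory.integrable_const _) measurableSet_Ioc hcard
    _ = indepNum G := by simp

/-- The Bloch vector `(|a|² - |b|², Re (a b̄), Im (a b̄))` of `(a, b) ∈ ℂ²` (up to scaling of
the coordinates) is lexicographically positive. -/
def BlochPos (a b : ℂ) : Prop :=
  0 < Complex.normSq a - Complex.normSq b ∨
    (Complex.normSq a - Complex.normSq b = 0 ∧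
      (0 < (a * star b).re ∨ ((a * star b).re = 0 ∧ 0 < (a * star b).im)))

/-- Orthogonal nonzero vectors of `ℂ²` have Bloch vectors of opposite signs. -/
lemma blochPos_iff_not {a b a' b' : ℂ} (h : a ≠ 0 ∨ b ≠ 0) (h' : a' ≠ 0 ∨ b' ≠ 0)
    (horth : star a * a' + star b * b' = 0) : BlochPos a b ↔ ¬ BlochPos a' b' := by
  -- The orthogonal complement of `(a, b)` is spanned by `(-b̄, ā)`.
  obtain ⟨l, rfl, rfl⟩ : ∃ l : ℂ, a' = -(l * star b) ∧ b' = l * star a := by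
    by_cases ha : a = 0
    · subst ha
      have hb : b ≠ 0 := by tauto
      have hsb : star b ≠ 0 := star_ne_zero.mpr hb
      refine ⟨-a' / star b, by field_simp, ?_⟩
      simpa [hb] using horth
    · have hsa : star a ≠ 0 := star_ne_zero.mpr ha
      refine ⟨b' / star a, ?_, by field_simp⟩
      field_simp
      linear_combination horth
  have hl : 0 < Complex.normSq l := by
    rw [Complex.normSq_pos]
    rintro rfl
    simp at h'
  have e1 : Complex.normSq (-(l * star b)) - Complex.normSq (l * star a)
      = -(Complex.normSq l * (Complex.normSq a - Complex.normSq b)) := by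
    simp; ring
  have e2 : -(l * star b) * star (l * star a) = -((Complex.normSq l : ℂ) * (a * star b)) := by
    rw [Complex.normSq_eq_conj_mul_self]; simp; ring
  have hne : ¬ (Complex.normSq a - Complex.normSq b = 0 ∧ (a * star b).re = 0 ∧
      (a * star b).im = 0) := by
    rintro ⟨p, q, r⟩
    have hz : a * star b = 0 := Complex.ext q r
    rcases mul_eq_zero.mp hz with rfl | hb
    · simp at p; tauto
    · obtain rfl : b = 0 := by simpa using hb
      simp at p; tauto
  unfold BlochPos
  rw [e1, e2, Complex.neg_re, Complex.neg_im, Complex.re_ofReal_mul, Complex.im_ofReal_mul]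
  generalize Complex.normSq a - Complex.normSq b = p at *
  generalize (a * star b).re = q at *
  generalize (a * star b).im = r at *
  have key : ∀ t : ℝ, (0 < -(Complex.normSq l * t) ↔ t < 0) ∧
      (-(Complex.normSq l * t) = 0 ↔ t = 0) := fun t =>
    ⟨by rw [neg_pos, mul_neg_iff]; constructor
        · rintro (h | h)
          · exact h.2
          · linarith [h.1]
        · exact fun h => Or.inl ⟨hl, h⟩,
      by simp [hl.ne']⟩
  simp only [key]
  rcases lt_trichotomy p 0 with hp | hp | hp <;> rcases lt_trichotomy q 0 with hq | hq | hq <;>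
    rcases lt_trichotomy r 0 with hr | hr | hr <;>
    simp_all [hp.not_gt, hq.not_gt, hr.not_gt, ne_of_gt, ne_of_lt]

/-- A positive semidefinite matrix of rank at most two is a Gram matrix of vectors
`(a p, b p) ∈ ℂ²`. -/
lemma exists_gram {m : ℕ} (X : Matrix (Fin m) (Fin m) ℂ) (hX : X.PosSemidef)
    (hr : X.rank ≤ 2) :
    ∃ a b : Fin m → ℂ, ∀ p q, X p q = star (a p) * a q + star (b p) * b q := by
  obtain ⟨B, rfl⟩ : ∃ B : Matrix (Fin m) (Fin m) ℂ, X = B.conjTranspose * B := by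
    open scoped MatrixOrder in
    exact CStarAlgebra.nonneg_iff_eq_star_mul_self.mp hX.nonneg
  rw [Matrix.rank_conjTranspose_mul_self] at hr
  let v : Fin m → EuclideanSpace ℂ (Fin m) := fun p => WithLp.toLp 2 (B.col p)
  let S : Submodule ℂ (EuclideanSpace ℂ (Fin m)) := Submodule.span ℂ (Set.range v)
  have hS : Module.finrank ℂ S ≤ 2 := by
    have : S = (Submodule.span ℂ (Set.range B.col)).map
        (WithLp.linearEquiv 2 ℂ (Fin m → ℂ)).symm.toLinearMap := by
      rw [Submodule.map_span, ← Set.range_comp]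
      rfl
    rw [this, LinearEquiv.finrank_map_eq, ← Matrix.rank_eq_finrank_span_cols]
    exact hr
  let w : Fin m → S := fun p => ⟨v p, Submodule.subset_span ⟨p, rfl⟩⟩
  have hw : ∀ p q, (B.conjTranspose * B) p q = inner ℂ (w p) (w q) := by
    intro p q
    simp [w, v, Matrix.mul_apply, PiLp.inner_apply, mul_comm]
  simp only [hw]
  have e := stdOrthonormalBasis ℂ S
  have hsum : ∀ p q, inner ℂ (w p) (w q) = ∑ k, star (e.repr (w p) k) * e.repr (w q) k := by
    intro p q
    rw [← e.repr.inner_map_map, PiLp.inner_apply]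
    simp [mul_comm]
  simp only [hsum]
  generalize Module.finrank ℂ S = d at *
  interval_cases d
  · exact ⟨0, 0, by simp⟩
  · exact ⟨fun p => e.repr (w p) 0, 0, by simp⟩
  · exact ⟨fun p => e.repr (w p) 0, fun p => e.repr (w p) 1, by simp [Fin.sum_univ_two]⟩

/-- The rank-2-restricted Lovász theta value `ϑ²(G)` equals the independence
number `α(G)`: the value `α(G)` is attained by a rank-≤2 feasible solution, and every
rank-≤2 feasible solution has value at most `α(G)`. -/
theorem stmt_4 (n : ℕ) (G : SimpleGraph (Fin n)) :
    IsGreatest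
      {t : ℝ | ∃ X : Matrix (Fin (n + 1)) (Fin (n + 1)) ℂ, X.PosSemidef ∧ X 0 0 = 1 ∧
        (∀ i : Fin n, X i.succ i.succ = X 0 i.succ) ∧
        (∀ i j : Fin n, G.Adj i j → X i.succ j.succ = 0) ∧
        X.rank ≤ 2 ∧
        t = (∑ i : Fin n, X i.succ i.succ).re}
      (indepNum G : ℝ) := by
  constructor
  · obtain ⟨s, hs, hind⟩ := exists_card_eq_indepNum G
    classical
    let u : Fin (n + 1) → ℂ := Fin.cons 1 fun i => if i ∈ s then 1 else 0
    refine ⟨Matrix.vecMulVec u (star u), Matrix.posSemidef_vecMulVec_self_star u, ?_, ?_, ?_,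
      (Matrix.rank_vecMulVec_le _ _).trans (by norm_num), ?_⟩
    · simp [u, Matrix.vecMulVec_apply]
    · intro i
      simp [u, Matrix.vecMulVec_apply]
    · intro i j hij
      have : ¬ (i ∈ s ∧ j ∈ s) := fun h => hind i h.1 j h.2 hij
      simp only [Matrix.vecMulVec_apply, u, Fin.cons_succ, Pi.star_apply]
      split_ifs <;> simp_all
    · rw [← hs]
      simp [u, Matrix.vecMulVec_apply]
  · rintro t ⟨X, hX, h00, hdiag, hadj, hr, rfl⟩
    obtain ⟨a, b, hab⟩ := exists_gram X hX hr
    have hx : ∀ i : Fin n, (X i.succ i.succ).re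
        = Complex.normSq (a i.succ) + Complex.normSq (b i.succ) := by
      intro i
      rw [hab]
      simp [Complex.normSq_apply]
    have h00' : (star (a 0) * a 0 + star (b 0) * b 0).re = 1 := by
      rw [← hab, h00, Complex.one_re]
    have hd : ∀ i : Fin n, Complex.normSq (a i.succ) + Complex.normSq (b i.succ)
        = (star (a 0) * a i.succ + star (b 0) * b i.succ).re := by
      intro i
      rw [← hx, hdiag, hab]
    rw [Complex.re_sum]
    refine sum_le_of_coloring G _ (fun i => BlochPos (a i.succ) (b i.succ)) ?_ ?_ ?_ ?_
    · intro i
      rw [hx]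
      exact add_nonneg (Complex.normSq_nonneg _) (Complex.normSq_nonneg _)
    · intro i
      -- `‖v₀ - vᵢ‖² = 1 - xᵢ`
      have hn := add_nonneg (Complex.normSq_nonneg (a 0 - a i.succ))
        (Complex.normSq_nonneg (b 0 - b i.succ))
      have hi := hd i
      rw [hx]
      simp [Complex.normSq_apply] at hn hi h00' ⊢
      linarith
    · intro i j hij
      -- `‖v₀ - vᵢ - vⱼ‖² = 1 - xᵢ - xⱼ` since `vᵢ ⊥ vⱼ`
      have hn := add_nonneg (Complex.normSq_nonneg (a 0 - a i.succ - a j.succ))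
        (Complex.normSq_nonneg (b 0 - b i.succ - b j.succ))
      have hi := hd i
      have hj := hd j
      have ho := congrArg Complex.re ((hab i.succ j.succ).symm.trans (hadj i j hij))
      rw [hx, hx]
      simp [Complex.normSq_apply] at hn hi hj ho h00' ⊢
      linarith
    · intro i j hij hi hj
      have hne : ∀ k : Fin n, 0 < (X k.succ k.succ).re → a k.succ ≠ 0 ∨ b k.succ ≠ 0 := by
        intro k hk
        by_contra! hcon
        rw [hx, hcon.1, hcon.2] at hk
        simp at hk
      exact blochPos_iff_not (hne i hi) (hne j hj)
        ((hab i.succ j.succ).symm.trans (hadj i j hij))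
end

section
/- Barvinok bound: Let A_1, …, A_m and C be Hermitian n×n complex matrices and b ∈ ℝ^m. Suppose X* is a positive semidefinite n×n matrix with tr(A_i X*) = b_i for all i ∈ {1,…,m} and such that tr(C X*) ≥ tr(C X) for every positive semidefinite X satisfying tr(A_i X) = b_i for all i (i.e., X* is an optimal solution of the SDP max tr(CX) subject to tr(A_iX) = b_i, X ⪰ 0). Then there exists a positive semidefinite matrix X' with tr(A_i X') = b_i for all i, tr(C X') = tr(C X*), and whose rank r satisfies r(r+1)/2 ≤ m. -/
/-!
The proof shows the stronger complex bound `r ^ 2 ≤ m` for an optimal solution of least rank.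

Let `X` be optimal of rank `r` with `m < r ^ 2`, and factor `X = V Vᴴ` with `V` of size `n × r`.
Hermitian `r × r` matrices form a real space of dimension `r ^ 2`, so some Hermitian `H ≠ 0`
satisfies `tr (A i * V H Vᴴ) = 0` for all `i` (`exists_hermitian_trace_eq_zero`). Scaling `H` by the
inverse of an eigenvalue of largest modulus makes `1 + H` and `1 - H` positive semidefinite and
`1 - H` singular (`exists_scaling`). Hence `X ± V H Vᴴ = V (1 ± H) Vᴴ` are both feasible, optimality
of `X` forces `tr (C * V H Vᴴ) = 0`, and `X - V H Vᴴ` is an optimal solution of smaller rank.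
Finally `r ≤ r ^ 2` turns `r ^ 2 ≤ m` into `r (r + 1) ≤ 2 m`.
-/

open scoped ComplexOrder
open Matrix

/-- A real matrix `M` is encoded as the Hermitian matrix `(M + Mᵀ) + i (M - Mᵀ)`. This is a real
linear bijection onto Hermitian matrices; only injectivity is used, as it exhibits `r ^ 2` real
dimensions of Hermitian matrices. -/
def hermOfReal {κ : Type*} : Matrix κ κ ℝ →ₗ[ℝ] Matrix κ κ ℂ where
  toFun M := Matrix.of fun i j => ⟨M i j + M j i, M i j - M j i⟩
  map_add' M N := by
    ext i j
    apply Complex.ext <;> simp <;> ring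
  map_smul' c M := by
    ext i j
    apply Complex.ext <;> simp <;> ring

lemma hermOfReal_isHermitian {κ : Type*} (M : Matrix κ κ ℝ) : (hermOfReal M).IsHermitian := by
  ext i j
  apply Complex.ext <;> simp [hermOfReal, add_comm]

lemma hermOfReal_eq_zero {κ : Type*} {M : Matrix κ κ ℝ} (h : hermOfReal M = 0) : M = 0 := by
  ext i j
  have h1 := congrFun (congrFun h i) j
  have h2 := congrArg Complex.re h1
  have h3 := congrArg Complex.im h1
  simp [hermOfReal] at h2 h3 ⊢
  linarith

lemma trace_mul_im_eq_zero {ι : Type*} [Fintype ι] {A X : Matrix ι ι ℂ}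
    (hA : A.IsHermitian) (hX : X.IsHermitian) : (A * X).trace.im = 0 := by
  have h : star (A * X).trace = (A * X).trace := by
    rw [← trace_conjTranspose, conjTranspose_mul, hA.eq, hX.eq, trace_mul_comm]
  exact Complex.conj_eq_iff_im.mp h

lemma exists_hermitian_trace_eq_zero {ι κ : Type*} [Fintype ι] [Fintype κ] {m : ℕ}
    (A : Fin m → Matrix ι ι ℂ) (hA : ∀ i, (A i).IsHermitian) (V : Matrix ι κ ℂ)
    (hm : m < Fintype.card κ ^ 2) :
    ∃ H : Matrix κ κ ℂ, H.IsHermitian ∧ H ≠ 0 ∧ ∀ i, (A i * (V * H * Vᴴ)).trace = 0 := by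
  let f : Matrix κ κ ℝ →ₗ[ℝ] (Fin m → ℝ) :=
    { toFun := fun M i => (A i * (V * hermOfReal M * Vᴴ)).trace.re
      map_add' := fun M N => by
        ext i
        simp [Matrix.mul_add, Matrix.add_mul]
      map_smul' := fun c M => by
        ext i
        simp }
  have hker : LinearMap.ker f ≠ ⊥ := by
    apply LinearMap.ker_ne_bot_of_finrank_lt
    simp only [Module.finrank_matrix, Module.finrank_self, Module.finrank_fin_fun]
    nlinarith
  obtain ⟨M, hM, hM0⟩ := Submodule.exists_mem_ne_zero_of_ne_bot hker
  have hH := hermOfReal_isHermitian M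
  refine ⟨hermOfReal M, hH, fun h => hM0 (hermOfReal_eq_zero h), fun i => ?_⟩
  exact Complex.ext (congrFun (LinearMap.mem_ker.mp hM) i)
    (trace_mul_im_eq_zero (hA i) (isHermitian_mul_mul_conjTranspose V hH))

/-- The scaling factor is the inverse of an eigenvalue of `H` of largest modulus. -/
lemma exists_scaling {κ : Type*} [Fintype κ] [DecidableEq κ] {H : Matrix κ κ ℂ}
    (hH : H.IsHermitian) (h0 : H ≠ 0) :
    ∃ s : ℝ, (1 + (s : ℂ) • H).PosSemidef ∧ (1 - (s : ℂ) • H).PosSemidef ∧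
      (1 - (s : ℂ) • H).rank < Fintype.card κ := by
  have hex : ∃ k, hH.eigenvalues k ≠ 0 := by
    by_contra! h
    exact h0 (hH.eigenvalues_eq_zero_iff.mp (funext h))
  obtain ⟨k₀, hk₀⟩ := hex
  obtain ⟨k, -, hk⟩ := Finset.exists_max_image Finset.univ (fun i => |hH.eigenvalues i|)
    ⟨k₀, Finset.mem_univ _⟩
  have hkpos : 0 < |hH.eigenvalues k| := (abs_pos.mpr hk₀).trans_le (hk k₀ (Finset.mem_univ _))
  have hkne : hH.eigenvalues k ≠ 0 := abs_pos.mp hkpos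
  set U : Matrix κ κ ℂ := (hH.eigenvectorUnitary : Matrix κ κ ℂ)
  have hUU : U * Uᴴ = 1 := Unitary.coe_mul_star_self hH.eigenvectorUnitary
  have hspec : H = U * diagonal (fun i => (hH.eigenvalues i : ℂ)) * Uᴴ := hH.spectral_theorem
  have hdiag : ∀ s : ℝ, 1 + (s : ℂ) • H =
      U * diagonal (fun i => ((1 + s * hH.eigenvalues i : ℝ) : ℂ)) * Uᴴ := by
    intro s
    have : diagonal (fun i => ((1 + s * hH.eigenvalues i : ℝ) : ℂ)) =
        1 + (s : ℂ) • diagonal (fun i => (hH.eigenvalues i : ℂ)) := by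
      ext i j
      by_cases hij : i = j <;> simp [hij]
    rw [this, Matrix.mul_add, Matrix.add_mul, Matrix.mul_one, hUU, Matrix.mul_smul,
      Matrix.smul_mul, ← hspec]
  have hpsd : ∀ s : ℝ, |s| = |hH.eigenvalues k|⁻¹ → (1 + (s : ℂ) • H).PosSemidef := by
    intro s hs
    rw [hdiag]
    refine PosSemidef.mul_mul_conjTranspose_same (posSemidef_diagonal_iff.mpr fun i => ?_) U
    have h1 : |s * hH.eigenvalues i| ≤ 1 := by
      rw [abs_mul, hs, inv_mul_le_iff₀ hkpos, mul_one]
      exact hk i (Finset.mem_univ _)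
    have := (abs_le.mp h1).1
    exact_mod_cast (by linarith : (0 : ℝ) ≤ 1 + s * hH.eigenvalues i)
  have hneg : ∀ s : ℝ, 1 - (s : ℂ) • H = 1 + ((-s : ℝ) : ℂ) • H := by
    intro s
    simp [sub_eq_add_neg]
  refine ⟨(hH.eigenvalues k)⁻¹, hpsd _ (abs_inv _), ?_, ?_⟩
  · rw [hneg]
    exact hpsd _ (by rw [abs_neg, abs_inv])
  · rw [hneg, hdiag]
    refine ((rank_mul_le_left _ _).trans (rank_mul_le_right _ _)).trans_lt ?_
    rw [rank_diagonal]
    refine Fintype.card_subtype_lt (x := k) ?_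
    simp [hkne]

/-- A positive semidefinite matrix factors through exactly `rank X` coordinates, namely the indices
of its nonzero eigenvalues. -/
lemma exists_rank_factorization {ι : Type*} [Fintype ι] [DecidableEq ι] {X : Matrix ι ι ℂ}
    (hX : X.PosSemidef) :
    ∃ V : Matrix ι {i // hX.isHermitian.eigenvalues i ≠ 0} ℂ, X = V * Vᴴ := by
  set hH := hX.isHermitian
  refine ⟨Matrix.of fun i k => (hH.eigenvectorUnitary : Matrix ι ι ℂ) i k *
    (√(hH.eigenvalues k) : ℝ), ?_⟩
  have hspec : X = (hH.eigenvectorUnitary : Matrix ι ι ℂ) *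
      diagonal (fun i => (hH.eigenvalues i : ℂ)) * (hH.eigenvectorUnitary : Matrix ι ι ℂ)ᴴ :=
    hH.spectral_theorem
  set U : Matrix ι ι ℂ := (hH.eigenvectorUnitary : Matrix ι ι ℂ)
  ext i j
  have hsq : ∀ k, ((√(hH.eigenvalues k) : ℝ) : ℂ) * (√(hH.eigenvalues k) : ℝ) =
      (hH.eigenvalues k : ℂ) := fun k => by
    rw [← Complex.ofReal_mul, Real.mul_self_sqrt (hX.eigenvalues_nonneg k)]
  have hleft : X i j = ∑ k, U i k * (hH.eigenvalues k : ℂ) * star (U j k) := by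
    have h := congrFun (congrFun hspec i) j
    rw [Matrix.mul_apply] at h
    simpa only [Matrix.mul_diagonal, conjTranspose_apply] using h
  rw [hleft, Matrix.mul_apply,
    ← Fintype.sum_subtype_add_sum_subtype (fun k => hH.eigenvalues k ≠ 0)]
  have hzero : ∑ k : {k // ¬ hH.eigenvalues k ≠ 0},
      U i k * (hH.eigenvalues k : ℂ) * star (U j k) = 0 :=
    Finset.sum_eq_zero fun k _ => by simp [not_not.mp k.2]
  rw [hzero, add_zero]
  refine Finset.sum_congr rfl fun k _ => ?_
  rw [← hsq k]
  simp only [conjTranspose_apply, of_apply, star_mul', Complex.star_def, Complex.conj_ofReal]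
  ring

/-- If `m < (rank X) ^ 2`, then `X` is the midpoint of two positive semidefinite matrices with the
same values of `tr (A i * ·)`, one of which has smaller rank. -/
lemma exists_direction {ι : Type*} [Fintype ι] [DecidableEq ι] {m : ℕ}
    (A : Fin m → Matrix ι ι ℂ) (hA : ∀ i, (A i).IsHermitian) {X : Matrix ι ι ℂ}
    (hX : X.PosSemidef) (hm : m < X.rank ^ 2) :
    ∃ D : Matrix ι ι ℂ, (X + D).PosSemidef ∧ (X - D).PosSemidef ∧ (X - D).rank < X.rank ∧
      ∀ i, (A i * D).trace = 0 := by
  obtain ⟨V, hV⟩ := exists_rank_factorization hX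
  have hr := hX.isHermitian.rank_eq_card_non_zero_eigs
  obtain ⟨H, hH, hH0, htr⟩ := exists_hermitian_trace_eq_zero A hA V (by rwa [← hr])
  obtain ⟨s, hp, hn, hlt⟩ := exists_scaling hH hH0
  have hadd : X + (s : ℂ) • (V * H * Vᴴ) = V * (1 + (s : ℂ) • H) * Vᴴ := by
    simp [Matrix.mul_add, Matrix.add_mul, ← hV]
  have hsub : X - (s : ℂ) • (V * H * Vᴴ) = V * (1 - (s : ℂ) • H) * Vᴴ := by
    simp [Matrix.mul_sub, Matrix.sub_mul, ← hV]
  refine ⟨(s : ℂ) • (V * H * Vᴴ), ?_, ?_, ?_, fun i => ?_⟩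
  · rw [hadd]
    exact hp.mul_mul_conjTranspose_same V
  · rw [hsub]
    exact hn.mul_mul_conjTranspose_same V
  · rw [hsub, hr]
    exact ((rank_mul_le_left _ _).trans (rank_mul_le_right _ _)).trans_lt hlt
  · rw [Matrix.mul_smul, trace_smul, htr i, smul_zero]

/-- Barvinok bound: any SDP `max tr(CX) s.t. tr(A_i X) = b_i, X ⪰ 0` that has an
optimal solution has an optimal solution `X'` whose rank `r` satisfies `r(r+1)/2 ≤ m`
(stated as `r(r+1) ≤ 2m`). -/
theorem stmt_8 (n m : ℕ) (A : Fin m → Matrix (Fin n) (Fin n) ℂ)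
    (C : Matrix (Fin n) (Fin n) ℂ)
    (hA : ∀ i, (A i).IsHermitian) (hC : C.IsHermitian) (b : Fin m → ℝ)
    (Xstar : Matrix (Fin n) (Fin n) ℂ) (hXstar : Xstar.PosSemidef)
    (hfeas : ∀ i, (A i * Xstar).trace = (b i : ℂ))
    (hopt : ∀ X : Matrix (Fin n) (Fin n) ℂ, X.PosSemidef →
      (∀ i, (A i * X).trace = (b i : ℂ)) →
      (C * X).trace.re ≤ (C * Xstar).trace.re) :
    ∃ X' : Matrix (Fin n) (Fin n) ℂ, X'.PosSemidef ∧
      (∀ i, (A i * X').trace = (b i : ℂ)) ∧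
      (C * X').trace = (C * Xstar).trace ∧
      X'.rank * (X'.rank + 1) ≤ 2 * m := by
  have key : ∀ (r : ℕ) (X : Matrix (Fin n) (Fin n) ℂ), X.rank = r → X.PosSemidef →
      (∀ i, (A i * X).trace = (b i : ℂ)) → (C * X).trace = (C * Xstar).trace →
      ∃ X' : Matrix (Fin n) (Fin n) ℂ, X'.PosSemidef ∧
        (∀ i, (A i * X').trace = (b i : ℂ)) ∧
        (C * X').trace = (C * Xstar).trace ∧ X'.rank ^ 2 ≤ m := by
    intro r
    induction r using Nat.strong_induction_on with
    | _ r ih =>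
      intro X hr hX hf hc
      by_cases hm : X.rank ^ 2 ≤ m
      · exact ⟨X, hX, hf, hc, hm⟩
      obtain ⟨D, hadd, hsub, hlt, htr⟩ := exists_direction A hA hX (not_le.mp hm)
      have hf_add : ∀ i, (A i * (X + D)).trace = (b i : ℂ) := fun i => by
        rw [Matrix.mul_add, trace_add, htr i, hf i, add_zero]
      have hf_sub : ∀ i, (A i * (X - D)).trace = (b i : ℂ) := fun i => by
        rw [Matrix.mul_sub, trace_sub, htr i, hf i, sub_zero]
      have h1 := hopt _ hadd hf_add
      have h2 := hopt _ hsub hf_sub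
      rw [Matrix.mul_add, trace_add, hc, Complex.add_re] at h1
      rw [Matrix.mul_sub, trace_sub, hc, Complex.sub_re] at h2
      refine ih _ (hr ▸ hlt) (X - D) rfl hsub hf_sub (Complex.ext ?_ ?_)
      · rw [Matrix.mul_sub, trace_sub, hc, Complex.sub_re]
        linarith
      · rw [trace_mul_im_eq_zero hC hsub.isHermitian, trace_mul_im_eq_zero hC hXstar.isHermitian]
  obtain ⟨X', hX', hf, hc, hr⟩ := key _ Xstar rfl hXstar hfeas rfl
  have hself := Nat.le_self_pow two_ne_zero X'.rank
  exact ⟨X', hX', hf, hc, by nlinarith⟩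
end

section
/- Let G be a simple graph on vertex set {1,…,n} with edge set E. Then there exists a complex positive semidefinite (n+1)×(n+1) matrix X (indexed by {0,1,…,n}) with X_{00} = 1, X_{ii} = X_{0i} for all i ∈ {1,…,n}, X_{ij} = 0 whenever i and j are adjacent in G, such that Σ_{i=1}^n X_{ii} ≥ Σ_{i=1}^n Y_{ii} for every matrix Y satisfying the same constraints (i.e., X is an optimal solution of the Lovász theta SDP of G), and such that the rank r of X satisfies r(r+1)/2 ≤ 1 + n + |E|. Consequently, the Lovász theta number ϑ(G) is attained by a feasible solution of rank at most (1/2)(√(8(n+|E|)+9) − 1). -/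
/-!
The bound is the Barvinok–Pataki argument, run on real Gram factorizations.

Passing to real parts turns a complex feasible `Y = Bᴴ B` into a real feasible matrix with the same
objective, and `Re Y = W Wᵀ` where the columns of `W` are the real and imaginary parts of the
columns of `Bᴴ` (`exists_real_factor`). Feasibility forces all entries of such a `W` into `[-1, 1]`,
so an optimal factor exists by compactness (`exists_optimal_factor`).

If `V` is an optimal factor with `k` columns and `k (k + 1) / 2` exceeds the number `m` of linear
constraints, then a nonzero symmetric `S` exists for which `V S Vᵀ` is annihilated by all
constraints. The matrices `V (1 ± t S) Vᵀ` are feasible as long as `1 ± t S` is positive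
semidefinite, hence by optimality `V S Vᵀ` is also annihilated by the objective. Choosing `t` so
that `1 + t S` becomes singular gives an optimal factor with one column less (`drop_column`).
Iterating ends with `k (k + 1) ≤ 2 m` (`exists_small_factor`), and `k` bounds the rank of `V Vᵀ`.
-/

open scoped ComplexOrder Matrix

namespace LovaszRank

/-- The symmetric matrix whose entries are prescribed on unordered pairs of indices. -/
def symMat {k : ℕ} (f : Sym2 (Fin k) → ℝ) : Matrix (Fin k) (Fin k) ℝ :=
  Matrix.of fun i j => f s(i, j)

lemma symMat_isHermitian {k : ℕ} (f : Sym2 (Fin k) → ℝ) : (symMat f).IsHermitian := by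
  ext i j
  simp [symMat, Sym2.eq_swap]

/-- A dimension count: symmetric `k × k` matrices outnumber the constraints. -/
lemma exists_sym_perturbation {N ι : Type*} [Fintype N] [Fintype ι] {k : ℕ}
    (L : Matrix N N ℝ →ₗ[ℝ] (ι → ℝ)) (V : Matrix N (Fin k) ℝ)
    (hk : 2 * Fintype.card ι < k * (k + 1)) :
    ∃ S : Matrix (Fin k) (Fin k) ℝ, S.IsHermitian ∧ S ≠ 0 ∧ L (V * S * Vᵀ) = 0 := by
  let Φ : (Sym2 (Fin k) → ℝ) →ₗ[ℝ] (ι → ℝ) :=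
    L.comp
      { toFun := fun f => V * symMat f * Vᵀ
        map_add' := fun f g => by
          have : symMat (f + g) = symMat f + symMat g := rfl
          rw [this, Matrix.mul_add, Matrix.add_mul]
        map_smul' := fun c f => by
          have : symMat (c • f) = c • symMat f := rfl
          rw [this, Matrix.mul_smul, Matrix.smul_mul, RingHom.id_apply] }
  have hker : Φ.ker ≠ ⊥ := by
    apply LinearMap.ker_ne_bot_of_finrank_lt
    rw [Module.finrank_fintype_fun_eq_card, Module.finrank_fintype_fun_eq_card, Sym2.card,
      Fintype.card_fin, Nat.choose_two_right, Nat.add_sub_cancel, Nat.lt_div_iff_mul_lt two_pos]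
    have := Nat.even_mul_succ_self k
    obtain ⟨a, ha⟩ := this
    rw [mul_comm (k + 1) k]
    omega
  obtain ⟨f, hf, hf0⟩ := (Submodule.ne_bot_iff _).1 hker
  refine ⟨symMat f, symMat_isHermitian f, fun h => hf0 ?_, hf⟩
  ext e
  induction e with
  | h i j => exact congrFun (congrFun h i) j

/-- The factor of `V (1 + s S) Vᵀ` obtained from an orthogonal diagonalization of `S`. -/
lemma exists_perturbed_factor {N : Type*} [Fintype N] {k : ℕ}
    (V : Matrix N (Fin k) ℝ) {S : Matrix (Fin k) (Fin k) ℝ} (hS : S.IsHermitian) (s : ℝ)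
    (hs : ∀ i, 0 ≤ 1 + s * hS.eigenvalues i) :
    ∃ W : Matrix N (Fin k) ℝ, W * Wᵀ = V * Vᵀ + s • (V * S * Vᵀ) ∧
      ∀ i, 1 + s * hS.eigenvalues i = 0 → ∀ a, W a i = 0 := by
  set U : Matrix (Fin k) (Fin k) ℝ := hS.eigenvectorUnitary.1 with hU
  have hUU : U * Uᵀ = 1 := by
    have := Unitary.coe_mul_star_self hS.eigenvectorUnitary
    rwa [Unitary.coe_star, Matrix.star_eq_conjTranspose, Matrix.conjTranspose_eq_transpose_of_trivial] at this
  have hspec : S = U * Matrix.diagonal hS.eigenvalues * Uᵀ := by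
    have := hS.spectral_theorem
    rw [Unitary.conjStarAlgAut_apply, Matrix.star_eq_conjTranspose,
      Matrix.conjTranspose_eq_transpose_of_trivial] at this
    exact this
  refine ⟨V * U * Matrix.diagonal fun i => √(1 + s * hS.eigenvalues i), ?_, ?_⟩
  · have hD : Matrix.diagonal (fun i => √(1 + s * hS.eigenvalues i)) *
        Matrix.diagonal (fun i => √(1 + s * hS.eigenvalues i)) =
        1 + s • Matrix.diagonal hS.eigenvalues := by
      rw [Matrix.diagonal_mul_diagonal, ← Matrix.diagonal_one, ← Matrix.diagonal_smul,
        Matrix.diagonal_add]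
      congr 1
      ext i
      simp [Real.mul_self_sqrt (hs i)]
    calc _ = V * U * (Matrix.diagonal (fun i => √(1 + s * hS.eigenvalues i)) *
        Matrix.diagonal (fun i => √(1 + s * hS.eigenvalues i))) * Uᵀ * Vᵀ := by
          simp only [Matrix.transpose_mul, Matrix.diagonal_transpose, Matrix.mul_assoc]
      _ = V * (U * Uᵀ) * Vᵀ + s • (V * (U * Matrix.diagonal hS.eigenvalues * Uᵀ) * Vᵀ) := by
          rw [hD]
          simp only [Matrix.mul_add, Matrix.add_mul, Matrix.mul_smul, Matrix.smul_mul,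
            Matrix.mul_one, Matrix.mul_assoc]
      _ = _ := by rw [hUU, Matrix.mul_one, ← hspec]
  · intro i hi a
    rw [Matrix.mul_diagonal, hi, Real.sqrt_zero, mul_zero]

/-- The rank reduction step: an optimal factor with too many columns can be replaced by an
optimal factor with one column less. -/
lemma drop_column {N ι : Type*} [Fintype N] [Fintype ι] {k : ℕ}
    (L : Matrix N N ℝ →ₗ[ℝ] (ι → ℝ)) (c : Matrix N N ℝ →ₗ[ℝ] ℝ) (V : Matrix N (Fin (k + 1)) ℝ)
    (hk : 2 * Fintype.card ι < (k + 1) * (k + 1 + 1))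
    (hopt : ∀ W : Matrix N (Fin (k + 1)) ℝ, L (W * Wᵀ) = L (V * Vᵀ) → c (W * Wᵀ) ≤ c (V * Vᵀ)) :
    ∃ W : Matrix N (Fin k) ℝ, L (W * Wᵀ) = L (V * Vᵀ) ∧ c (W * Wᵀ) = c (V * Vᵀ) := by
  obtain ⟨S, hS, hS0, hLS⟩ := exists_sym_perturbation L V hk
  obtain ⟨i₀, hi₀⟩ := Finite.exists_max fun i => |hS.eigenvalues i|
  have hne : hS.eigenvalues i₀ ≠ 0 := by
    intro h
    apply hS0
    rw [← hS.eigenvalues_eq_zero_iff]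
    ext i
    have := hi₀ i
    rw [h, abs_zero] at this
    exact abs_nonpos_iff.1 this
  -- With this `s` the eigenvalue of `1 + s S` at `i₀` vanishes and those of `± s S` are in `[-1, 1]`.
  set s : ℝ := -(hS.eigenvalues i₀)⁻¹ with hs
  have habs : ∀ i, |s * hS.eigenvalues i| ≤ 1 := by
    intro i
    rw [hs, abs_mul, abs_neg, abs_inv, inv_mul_le_one₀ (abs_pos.2 hne)]
    exact hi₀ i
  obtain ⟨W, hW, hW0⟩ := exists_perturbed_factor V hS s fun i => by
    linarith [(abs_le.1 (habs i)).1]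
  obtain ⟨W', hW', -⟩ := exists_perturbed_factor V hS (-s) fun i => by
    linarith [(abs_le.1 (habs i)).2]
  have hLW : L (W * Wᵀ) = L (V * Vᵀ) := by rw [hW, map_add, map_smul, hLS, smul_zero, add_zero]
  have hLW' : L (W' * W'ᵀ) = L (V * Vᵀ) := by
    rw [hW', map_add, map_smul, hLS, smul_zero, add_zero]
  have hc : c (W * Wᵀ) = c (V * Vᵀ) := by
    have h₁ := hopt W hLW
    have h₂ := hopt W' hLW'
    rw [hW, map_add, map_smul, smul_eq_mul] at h₁ ⊢
    rw [hW', map_add, map_smul, smul_eq_mul] at h₂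
    linarith
  have hcol : ∀ a, W a i₀ = 0 := hW0 i₀ (by rw [hs, neg_mul, inv_mul_cancel₀ hne]; ring)
  have hsub : W.submatrix id i₀.succAbove * (W.submatrix id i₀.succAbove)ᵀ = W * Wᵀ := by
    ext a b
    simp [Matrix.mul_apply, Fin.sum_univ_succAbove _ i₀, hcol]
  exact ⟨W.submatrix id i₀.succAbove, by rw [hsub, hLW], by rw [hsub, hc]⟩

/-- Barvinok–Pataki bound for factors: `b` is the optimal value for the constraints `L = y`. -/
lemma exists_small_factor {N ι : Type*} [Fintype N] [Fintype ι]
    (L : Matrix N N ℝ →ₗ[ℝ] (ι → ℝ)) (c : Matrix N N ℝ →ₗ[ℝ] ℝ) (y : ι → ℝ) (b : ℝ)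
    (hb : ∀ (k : ℕ) (W : Matrix N (Fin k) ℝ), L (W * Wᵀ) = y → c (W * Wᵀ) ≤ b) :
    ∀ (k : ℕ) (V : Matrix N (Fin k) ℝ), L (V * Vᵀ) = y → c (V * Vᵀ) = b →
      ∃ (r : ℕ) (W : Matrix N (Fin r) ℝ), L (W * Wᵀ) = y ∧ c (W * Wᵀ) = b ∧
        r * (r + 1) ≤ 2 * Fintype.card ι
  | 0, V, hL, hc => ⟨0, V, hL, hc, by simp⟩
  | k + 1, V, hL, hc => by
    by_cases hk : (k + 1) * (k + 1 + 1) ≤ 2 * Fintype.card ι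
    · exact ⟨k + 1, V, hL, hc, hk⟩
    · obtain ⟨W, hLW, hcW⟩ := drop_column L c V (not_le.1 hk) fun W hW => by
        rw [hc]
        exact hb _ W (hW.trans hL)
      exact exists_small_factor L c y b hb k W (hLW.trans hL) (hcW.trans hc)

/-- The constraints of the theta SDP as a linear map; each edge contributes the entry at one
arbitrarily chosen orientation, which suffices on symmetric matrices. -/
noncomputable def thetaMap (n : ℕ) (G : SimpleGraph (Fin n)) [DecidableRel G.Adj] :
    Matrix (Fin (n + 1)) (Fin (n + 1)) ℝ →ₗ[ℝ] (Unit ⊕ Fin n ⊕ G.edgeFinset → ℝ) where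
  toFun M := Sum.elim (fun _ => M 0 0) (Sum.elim (fun i => M i.succ i.succ - M 0 i.succ)
    fun e => M (Quot.out e.1).1.succ (Quot.out e.1).2.succ)
  map_add' M M' := by
    ext (_ | _ | _) <;> simp [add_sub_add_comm]
  map_smul' t M := by
    ext (_ | _ | _) <;> simp [mul_sub]

/-- The objective of the theta SDP. -/
def thetaObj (n : ℕ) : Matrix (Fin (n + 1)) (Fin (n + 1)) ℝ →ₗ[ℝ] ℝ where
  toFun M := ∑ i : Fin n, M i.succ i.succ
  map_add' M M' := by simp [Finset.sum_add_distrib]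
  map_smul' t M := by simp [Finset.mul_sum]

/-- The right-hand side of the constraints: `1` for the corner entry, `0` otherwise. -/
def thetaRhs (n : ℕ) (G : SimpleGraph (Fin n)) [DecidableRel G.Adj] :
    Unit ⊕ Fin n ⊕ G.edgeFinset → ℝ :=
  Sum.elim (fun _ => 1) 0

lemma gram_isSymm {N κ : Type*} [Fintype κ] (V : Matrix N κ ℝ) : (V * Vᵀ).IsSymm := by
  rw [Matrix.IsSymm, Matrix.transpose_mul, Matrix.transpose_transpose]

lemma thetaMap_eq_iff {n : ℕ} {G : SimpleGraph (Fin n)} [DecidableRel G.Adj]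
    {M : Matrix (Fin (n + 1)) (Fin (n + 1)) ℝ} (hM : M.IsSymm) :
    thetaMap n G M = thetaRhs n G ↔ M 0 0 = 1 ∧ (∀ i : Fin n, M i.succ i.succ = M 0 i.succ) ∧
      ∀ i j : Fin n, G.Adj i j → M i.succ j.succ = 0 := by
  constructor
  · intro h
    refine ⟨congrFun h (Sum.inl ()), fun i => sub_eq_zero.1 (congrFun h (Sum.inr (Sum.inl i))), ?_⟩
    intro i j hij
    have he : s(i, j) ∈ G.edgeFinset := by simpa using hij
    have h0 : M (Quot.out s(i, j)).1.succ (Quot.out s(i, j)).2.succ = 0 :=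
      congrFun h (Sum.inr (Sum.inr ⟨s(i, j), he⟩))
    have hout : s((Quot.out s(i, j)).1, (Quot.out s(i, j)).2) = s(i, j) := Quot.out_eq _
    rcases Sym2.eq_iff.1 hout with ⟨h1, h2⟩ | ⟨h1, h2⟩
    · rwa [h1, h2] at h0
    · rw [h1, h2] at h0
      rw [← h0, hM.apply]
  · rintro ⟨h1, h2, h3⟩
    ext (_ | i | ⟨e, he⟩)
    · exact h1
    · exact sub_eq_zero.2 (h2 i)
    · refine h3 _ _ ?_
      have hout : s((Quot.out e).1, (Quot.out e).2) = e := Quot.out_eq _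
      rw [← SimpleGraph.mem_edgeSet, hout]
      exact SimpleGraph.mem_edgeFinset.1 he

/-- The real part of a positive semidefinite `N × N` matrix is a real Gram matrix of width `2 N`. -/
lemma exists_real_factor {N : ℕ} {Y : Matrix (Fin N) (Fin N) ℂ} (hY : Y.PosSemidef) :
    ∃ W : Matrix (Fin N) (Fin (N + N)) ℝ, W * Wᵀ = Y.map Complex.re := by
  open scoped MatrixOrder in
  obtain ⟨B, hB⟩ := CStarAlgebra.nonneg_iff_eq_star_mul_self.1 (Matrix.nonneg_iff_posSemidef.2 hY)
  refine ⟨Matrix.of fun i => Fin.append (fun k => (B k i).re) fun k => (B k i).im, ?_⟩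
  ext i j
  rw [hB]
  rw [Matrix.mul_apply, Fin.sum_univ_add]
  simp only [Matrix.of_apply, Matrix.transpose_apply, Fin.append_left, Fin.append_right]
  simp [Matrix.mul_apply, Finset.sum_add_distrib]

lemma exists_optimal_factor (n k : ℕ) (G : SimpleGraph (Fin n)) [DecidableRel G.Adj] :
    ∃ V : Matrix (Fin (n + 1)) (Fin (k + 1)) ℝ, thetaMap n G (V * Vᵀ) = thetaRhs n G ∧
      ∀ W : Matrix (Fin (n + 1)) (Fin (k + 1)) ℝ, thetaMap n G (W * Wᵀ) = thetaRhs n G →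
        thetaObj n (W * Wᵀ) ≤ thetaObj n (V * Vᵀ) := by
  let K : Set (Matrix (Fin (n + 1)) (Fin (k + 1)) ℝ) := {V | thetaMap n G (V * Vᵀ) = thetaRhs n G}
  have hcont : Continuous fun V : Matrix (Fin (n + 1)) (Fin (k + 1)) ℝ => V * Vᵀ := by fun_prop
  have hclosed : IsClosed K :=
    isClosed_eq ((LinearMap.continuous_of_finiteDimensional _).comp hcont) continuous_const
  have hbox : K ⊆ Set.univ.pi fun _ => Set.univ.pi fun _ => Set.Icc (-1 : ℝ) 1 := by
    intro V hV
    obtain ⟨h0, hd, -⟩ := (thetaMap_eq_iff (gram_isSymm V)).1 hV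
    have hentry : ∀ i a, V i a ^ 2 ≤ (V * Vᵀ) i i := by
      intro i a
      have := Finset.single_le_sum (f := fun a => V i a ^ 2) (fun a _ => sq_nonneg _)
        (Finset.mem_univ a)
      simpa [Matrix.mul_apply, sq] using this
    -- Cauchy–Schwarz gives `x² ≤ x` for the diagonal entries `x`.
    have hdiag : ∀ i, (V * Vᵀ) i i ≤ 1 := by
      intro i
      cases i using Fin.cases with
      | zero => exact h0.le
      | succ i =>
        have hcs := Finset.sum_mul_sq_le_sq_mul_sq Finset.univ (V 0) (V i.succ)
        have e1 : ∑ a, V 0 a ^ 2 = 1 := by rw [← h0]; simp [Matrix.mul_apply, sq]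
        have e2 : ∑ a, V i.succ a ^ 2 = (V * Vᵀ) i.succ i.succ := by simp [Matrix.mul_apply, sq]
        have e3 : ∑ a, V 0 a * V i.succ a = (V * Vᵀ) i.succ i.succ := by
          rw [hd]; simp [Matrix.mul_apply]
        rw [e1, e2, e3] at hcs
        nlinarith
    intro i _ a _
    exact abs_le.1 (abs_le_one_iff_mul_self_le_one.2 (by nlinarith [hentry i a, hdiag i]))
  have hK : IsCompact K := (isCompact_univ_pi fun _ => isCompact_univ_pi fun _ =>
    isCompact_Icc).of_isClosed_subset hclosed hbox
  have hne : K.Nonempty := by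
    -- The factor of the matrix unit at `(0, 0)`, i.e. of the empty stable set.
    refine ⟨Matrix.single 0 0 1, ?_⟩
    refine (thetaMap_eq_iff (gram_isSymm _)).2 ?_
    simp
  obtain ⟨V, hV, hmax⟩ := hK.exists_isMaxOn hne
    ((LinearMap.continuous_of_finiteDimensional (thetaObj n)).comp hcont).continuousOn
  exact ⟨V, hV, fun W hW => hmax hW⟩

end LovaszRank

open LovaszRank in
/-- The Lovász theta SDP of a graph `G` on `n` vertices with edge set `E` has an
optimal solution `X` whose rank `r` satisfies `r(r+1)/2 ≤ 1 + n + |E|` (stated as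
`r(r+1) ≤ 2(1 + n + |E|)`); consequently `ϑ(G)` is attained by a feasible solution of rank at
most `(√(8(n+|E|)+9) − 1)/2`. -/
theorem stmt_9 (n : ℕ) (G : SimpleGraph (Fin n)) [DecidableRel G.Adj] :
    ∃ X : Matrix (Fin (n + 1)) (Fin (n + 1)) ℂ, X.PosSemidef ∧ X 0 0 = 1 ∧
      (∀ i : Fin n, X i.succ i.succ = X 0 i.succ) ∧
      (∀ i j : Fin n, G.Adj i j → X i.succ j.succ = 0) ∧
      (∀ Y : Matrix (Fin (n + 1)) (Fin (n + 1)) ℂ, Y.PosSemidef → Y 0 0 = 1 →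
        (∀ i : Fin n, Y i.succ i.succ = Y 0 i.succ) →
        (∀ i j : Fin n, G.Adj i j → Y i.succ j.succ = 0) →
        (∑ i : Fin n, Y i.succ i.succ).re ≤ (∑ i : Fin n, X i.succ i.succ).re) ∧
      X.rank * (X.rank + 1) ≤ 2 * (1 + n + G.edgeFinset.card) ∧
      (X.rank : ℝ) ≤ (Real.sqrt (8 * (n + G.edgeFinset.card) + 9) - 1) / 2 := by
  -- The width is `2 (n + 1)`, as provided by `exists_real_factor`.
  obtain ⟨V, hV, hmax⟩ := exists_optimal_factor n (n + 1 + n) G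
  set b := thetaObj n (V * Vᵀ) with hb
  have hupper : ∀ Y : Matrix (Fin (n + 1)) (Fin (n + 1)) ℂ, Y.PosSemidef → Y 0 0 = 1 →
      (∀ i : Fin n, Y i.succ i.succ = Y 0 i.succ) →
      (∀ i j : Fin n, G.Adj i j → Y i.succ j.succ = 0) →
      (∑ i : Fin n, Y i.succ i.succ).re ≤ b := by
    intro Y hY h0 hd he
    obtain ⟨W, hW⟩ := exists_real_factor hY
    have := hmax W ((thetaMap_eq_iff (gram_isSymm _)).2 (by
      rw [hW]
      refine ⟨by simp [h0], fun i => by simp [hd], fun i j hij => by simp [he i j hij]⟩))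
    rw [hW] at this
    simpa [thetaObj] using this
  -- A real factor gives a complex feasible matrix with the same objective.
  have hlift : ∀ (k : ℕ) (W : Matrix (Fin (n + 1)) (Fin k) ℝ),
      thetaMap n G (W * Wᵀ) = thetaRhs n G →
      ∃ X : Matrix (Fin (n + 1)) (Fin (n + 1)) ℂ, X.PosSemidef ∧ X 0 0 = 1 ∧
        (∀ i : Fin n, X i.succ i.succ = X 0 i.succ) ∧
        (∀ i j : Fin n, G.Adj i j → X i.succ j.succ = 0) ∧
        (∑ i : Fin n, X i.succ i.succ).re = thetaObj n (W * Wᵀ) ∧ X.rank ≤ k := by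
    intro k W hW
    obtain ⟨h0, hd, he⟩ := (thetaMap_eq_iff (gram_isSymm _)).1 hW
    set C : Matrix (Fin (n + 1)) (Fin k) ℂ := W.map Complex.ofReal with hC
    have hentry : ∀ i j, (C * Cᴴ) i j = ((W * Wᵀ) i j : ℂ) := by
      intro i j
      simp [hC, Matrix.mul_apply]
    refine ⟨C * Cᴴ, Matrix.posSemidef_self_mul_conjTranspose C, ?_, ?_, ?_, ?_, ?_⟩
    · rw [hentry, h0, Complex.ofReal_one]
    · intro i
      rw [hentry, hentry, hd]
    · intro i j hij
      rw [hentry, he i j hij, Complex.ofReal_zero]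
    · simp only [hentry, Complex.re_sum, Complex.ofReal_re]
      rfl
    · exact (Matrix.rank_mul_le_left _ _).trans (Matrix.rank_le_width C)
  obtain ⟨r, W, hLW, hcW, hr⟩ := exists_small_factor (thetaMap n G) (thetaObj n) (thetaRhs n G) b
    (fun k W hW => by
      obtain ⟨X, hX, h0, hd, he, hobj, -⟩ := hlift k W hW
      rw [← hobj]
      exact hupper X hX h0 hd he) _ V hV rfl
  obtain ⟨X, hX, h0, hd, he, hobj, hrank⟩ := hlift r W hLW
  have hfin : X.rank * (X.rank + 1) ≤ 2 * (1 + n + G.edgeFinset.card) := by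
    refine (Nat.mul_le_mul hrank (Nat.succ_le_succ hrank)).trans (hr.trans (le_of_eq ?_))
    simp only [Fintype.card_sum, Fintype.card_unit, Fintype.card_fin, Fintype.card_coe]
    ring
  refine ⟨X, hX, h0, hd, he, ?_, hfin, ?_⟩
  · rw [hobj, hcW]
    exact hupper
  · have hreal : (X.rank : ℝ) * (X.rank + 1) ≤ 2 * (1 + n + G.edgeFinset.card) := by
      exact_mod_cast hfin
    have : 2 * (X.rank : ℝ) + 1 ≤ √(8 * (n + G.edgeFinset.card) + 9) :=
      Real.le_sqrt_of_sq_le (by nlinarith)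
    linarith
end

section
/- For every integer k ≥ 2, the independence number of the k-Qite graph equals k. -/
/-!
The vertices `k, …, 2k-1` form an independent set of size `k`. For the upper bound, let `s` be
independent. If `2k ∈ s`, then `s` misses all neighbours `k, …, 2k-1` of `2k` and contains at most
one clique vertex, so `|s| ≤ 2 ≤ k`. Otherwise `s` lies in the union of the `k` edges `{i, i + k}`,
and meets each of them at most once, so `|s| ≤ k`.
-/

/-- The `k`-Qite graph on the `2k+1` vertices `0, …, 2k` (vertex `i` here is `v_{i+1}` of the
paper): vertices `0, …, k-1` form a `k`-clique, vertex `i` is adjacent to vertex `i + k` for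
`0 ≤ i < k`, and vertex `2k` is adjacent to vertices `k, …, 2k-1`. -/
def qite (k : ℕ) : SimpleGraph (Fin (2 * k + 1)) :=
  SimpleGraph.fromRel (fun i j =>
    (i.val < k ∧ j.val < k) ∨
    (i.val < k ∧ j.val = i.val + k) ∨
    (i.val = 2 * k ∧ k ≤ j.val ∧ j.val < 2 * k))

lemma qite_indep_card_le {k : ℕ} (hk : 2 ≤ k) (s : Finset (Fin (2 * k + 1)))
    (hs : ∀ i ∈ s, ∀ j ∈ s, ¬ (qite k).Adj i j) : s.card ≤ k := by
  simp only [qite, SimpleGraph.fromRel_adj, ne_eq, Fin.ext_iff] at hs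
  by_cases h : ∃ x ∈ s, x.val = 2 * k
  · obtain ⟨x, hx, hxk⟩ := h
    refine le_trans ?_ hk
    -- `2k ↦ 1` and clique vertices `↦ 0` is injective on `s`.
    refine le_of_le_of_eq ?_ (Finset.card_range 2)
    apply Finset.card_le_card_of_injOn (fun v => if v.val = 2 * k then 1 else 0)
    · intro v _
      simp only [Finset.coe_range, Set.mem_Iio]
      split_ifs <;> omega
    · intro v hv w hw hvw
      have h1 := hs x hx v hv
      have h2 := hs x hx w hw
      have h3 := hs v hv w hw
      ext
      dsimp only at hvw
      split_ifs at hvw <;> omega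
  · push Not at h
    -- Collapsing each edge `{i, i + k}` to `i` is injective on `s`.
    refine le_of_le_of_eq ?_ (Finset.card_range k)
    apply Finset.card_le_card_of_injOn (fun v => if v.val < k then v.val else v.val - k)
    · intro v hv
      have h1 := h v hv
      simp only [Finset.coe_range, Set.mem_Iio]
      split_ifs <;> omega
    · intro v hv w hw hvw
      have h3 := hs v hv w hw
      ext
      dsimp only at hvw
      split_ifs at hvw <;> omega

lemma qite_exists_indep (k : ℕ) : ∃ s : Finset (Fin (2 * k + 1)), s.card = k ∧
    ∀ i ∈ s, ∀ j ∈ s, ¬ (qite k).Adj i j := by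
  refine ⟨Finset.Ico ⟨k, by omega⟩ ⟨2 * k, by omega⟩, ?_, ?_⟩
  · rw [Fin.card_Ico]
    dsimp only
    omega
  · intro i hi j hj
    simp only [Finset.mem_Ico, Fin.le_def, Fin.lt_def] at hi hj
    simp only [qite, SimpleGraph.fromRel_adj]
    omega

/-- For every `k ≥ 2`, the independence number of the `k`-Qite graph is `k`. -/
theorem stmt_10 (k : ℕ) (hk : 2 ≤ k) : indepNum (qite k) = k := by
  have hmax : IsGreatest {m | ∃ s : Finset (Fin (2 * k + 1)), s.card = m ∧
      ∀ i ∈ s, ∀ j ∈ s, ¬ (qite k).Adj i j} k := by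
    refine ⟨qite_exists_indep k, ?_⟩
    rintro m ⟨s, rfl, hs⟩
    exact qite_indep_card_le hk s hs
  exact hmax.csSup_eq
end

section
/- Let k ≥ 1 and let M be a k×k complex matrix whose diagonal entries are all zero and each of whose rows has Euclidean (ℓ2) norm equal to 1. Then for every x ∈ ℂ^k with ‖x‖ = 1, ‖Mx‖² ≤ k − 1; equivalently, the largest eigenvalue of M†M is at most k − 1. -/
/-- If `M` is a `k×k` complex matrix with zero diagonal whose rows are unit
vectors in `ℓ₂`, then `‖Mx‖² ≤ k − 1` for every unit vector `x`, i.e. the largest eigenvalue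
of `M†M` is at most `k − 1`. -/
theorem stmt_13 (k : ℕ) (hk : 1 ≤ k) (M : Matrix (Fin k) (Fin k) ℂ)
    (hdiag : ∀ i, M i i = 0)
    (hrow : ∀ i, ∑ j, ‖M i j‖ ^ 2 = 1)
    (x : Fin k → ℂ) (hx : ∑ i, ‖x i‖ ^ 2 = 1) :
    ∑ i, ‖M.mulVec x i‖ ^ 2 ≤ (k : ℝ) - 1 := by
  -- The `i`-th entry of `Mx` does not see `x i`, so Cauchy–Schwarz over `j ≠ i` loses `‖x i‖²`;
  -- summing these losses over all rows gives `k - ‖x‖² = k - 1`.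
  have key : ∀ i, ‖M.mulVec x i‖ ^ 2 ≤ 1 - ‖x i‖ ^ 2 := by
    intro i
    have h1 : ‖M.mulVec x i‖ ≤ ∑ j ∈ Finset.univ.erase i, ‖M i j‖ * ‖x j‖ := by
      have h : M.mulVec x i = ∑ j ∈ Finset.univ.erase i, M i j * x j := by
        rw [Finset.sum_erase _ (by simp [hdiag i])]
        rfl
      rw [h]
      exact (norm_sum_le _ _).trans_eq (Finset.sum_congr rfl fun j _ => norm_mul _ _)
    have hM : ∑ j ∈ Finset.univ.erase i, ‖M i j‖ ^ 2 = 1 := by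
      rw [Finset.sum_erase _ (by simp [hdiag i]), hrow i]
    have hX : ∑ j ∈ Finset.univ.erase i, ‖x j‖ ^ 2 = 1 - ‖x i‖ ^ 2 := by
      rw [Finset.sum_erase_eq_sub (Finset.mem_univ i), hx]
    calc ‖M.mulVec x i‖ ^ 2 ≤ (∑ j ∈ Finset.univ.erase i, ‖M i j‖ * ‖x j‖) ^ 2 := by gcongr
      _ ≤ _ := Finset.sum_mul_sq_le_sq_mul_sq _ _ _
      _ = 1 - ‖x i‖ ^ 2 := by rw [hM, hX, one_mul]
  calc ∑ i, ‖M.mulVec x i‖ ^ 2 ≤ ∑ i, (1 - ‖x i‖ ^ 2) := Finset.sum_le_sum fun i _ => key i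
    _ = (k : ℝ) - 1 := by simp [Finset.sum_sub_distrib, hx]
end

section
/- For every integer k ≥ 2: let ψ be a unit vector in ℂ^k and let Π_1, …, Π_{2k+1} be nonzero k×k complex matrices that are orthogonal projections (Hermitian and idempotent) satisfying Π_i Π_j = 0 whenever vertices v_i and v_j are adjacent in the k-Qite graph. Then Σ_{i=1}^{2k+1} ⟨ψ, Π_i ψ⟩ ≤ k. (Hence any experimental value of Σ_i p_i exceeding k for the k-Qite exclusivity graph certifies that the underlying quantum realisation has dimension at least k+1.) -/
/-!
Write `A i`, `B i` (`i < k`) and `C` for the projections at the vertices `i`, `i + k` and `2k`.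
The `A i` are `k` nonzero, pairwise orthogonal projections on `ℂ^k`, so they resolve the identity:
`∑ A i = 1` (`sum_eq_one_of_orthogonal`).  Since `B i` is orthogonal to both `A i` and `C`,
`B i = (1 - C) * B i * (1 - C) ≤ (1 - C) * (1 - A i) * (1 - C)`, and summing over `i` gives
`∑ B i ≤ (k - 1) • (1 - C)`.  Hence the sum of all projections is at most
`1 + (k - 1) • (1 - C) + C = k • 1 - (k - 2) • C ≤ k • 1` in the Loewner order.
-/

open scoped Matrix

/-- `k` nonzero pairwise orthogonal idempotents in dimension `k` sum to the identity: nonzero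
vectors in their ranges form a basis, on which the sum acts trivially. -/
theorem sum_eq_one_of_orthogonal {k : ℕ} (A : Fin k → Matrix (Fin k) (Fin k) ℂ)
    (hne : ∀ i, A i ≠ 0) (hidem : ∀ i, A i * A i = A i)
    (horth : ∀ i j, i ≠ j → A i * A j = 0) : ∑ i, A i = 1 := by
  have hw : ∀ i, ∃ w, A i *ᵥ w ≠ 0 := by
    intro i
    by_contra! h
    exact hne i (Matrix.ext_of_mulVec_single fun j => by rw [h, Matrix.zero_mulVec])
  choose w hw using hw
  have hAv : ∀ i j, A i *ᵥ (A j *ᵥ w j) = if i = j then A j *ᵥ w j else 0 := by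
    intro i j
    rw [Matrix.mulVec_mulVec]
    split_ifs with h
    · rw [h, hidem]
    · rw [horth i j h, Matrix.zero_mulVec]
  have hli : LinearIndependent ℂ fun i => A i *ᵥ w i := by
    rw [Fintype.linearIndependent_iff]
    intro c hc i
    have h := congrArg (fun x => A i *ᵥ x) hc
    simp only [Matrix.mulVec_sum, Matrix.mulVec_smul, hAv, Matrix.mulVec_zero] at h
    simpa [hw i] using h
  rcases Nat.eq_zero_or_pos k with rfl | hk
  · exact Subsingleton.elim _ _
  have : Nonempty (Fin k) := ⟨⟨0, hk⟩⟩
  let b := basisOfLinearIndependentOfCardEqFinrank hli (by simp)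
  apply Matrix.toLin'.injective
  refine b.ext fun j => ?_
  simp [b, hAv]

section

-- `Matrix.PosSemidef` over `ℂ` needs the partial order on `ℂ`.
open scoped ComplexOrder

theorem posSemidef_of_hermitian_idem {n : Type*} [Fintype n] {M : Matrix n n ℂ}
    (hherm : M.IsHermitian) (hidem : M * M = M) : M.PosSemidef := by
  have h := Matrix.posSemidef_conjTranspose_mul_self M
  rwa [hherm.eq, hidem] at h

/-- Splitting a sum over the vertices of the Qite graph into clique, middle layer and apex. -/
theorem sum_qite_split {M : Type*} [AddCommMonoid M] (k : ℕ) (f : Fin (2 * k + 1) → M) :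
    ∑ i, f i = ∑ i : Fin k, f ⟨i, by omega⟩ + ∑ i : Fin k, f ⟨i + k, by omega⟩
      + f ⟨2 * k, by omega⟩ := by
  let g : ℕ → M := fun n => if h : n < 2 * k + 1 then f ⟨n, h⟩ else 0
  have hg : ∀ n (h : n < 2 * k + 1), f ⟨n, h⟩ = g n := fun n h => by simp only [g, dif_pos h]
  have h1 : ∑ i, f i = ∑ i : Fin (2 * k + 1), g i :=
    Finset.sum_congr rfl fun i _ => hg i i.2
  rw [h1]
  simp only [hg]
  rw [Fin.sum_univ_eq_sum_range g, Fin.sum_univ_eq_sum_range g,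
    Fin.sum_univ_eq_sum_range (fun n => g (n + k)), Finset.sum_range_succ]
  congr 1
  rw [two_mul, Finset.sum_range_add]
  simp only [add_comm]

/-- The Loewner-order form of the bound, for the three families of projections. -/
theorem posSemidef_qite {k : ℕ} (hk : 2 ≤ k) (A B : Fin k → Matrix (Fin k) (Fin k) ℂ)
    (C : Matrix (Fin k) (Fin k) ℂ)
    (hA : ∀ i, (A i).IsHermitian) (hB : ∀ i, (B i).IsHermitian) (hC : C.IsHermitian)
    (hA2 : ∀ i, A i * A i = A i) (hB2 : ∀ i, B i * B i = B i) (hC2 : C * C = C)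
    (hsum : ∑ i, A i = 1) (hAB : ∀ i, A i * B i = 0) (hBA : ∀ i, B i * A i = 0)
    (hBC : ∀ i, B i * C = 0) (hCB : ∀ i, C * B i = 0) :
    ((k : ℂ) • (1 : Matrix (Fin k) (Fin k) ℂ) - (∑ i, A i + ∑ i, B i + C)).PosSemidef := by
  have hterm : ∀ i, ((1 - C) * (1 - A i - B i) * (1 - C)).PosSemidef := by
    intro i
    have hQ : (1 - A i - B i).PosSemidef := by
      apply posSemidef_of_hermitian_idem
      · exact (Matrix.isHermitian_one.sub (hA i)).sub (hB i)
      · simp [mul_sub, sub_mul, hA2, hB2, hAB, hBA]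
    have h := hQ.conjTranspose_mul_mul_same (1 - C)
    rwa [(Matrix.isHermitian_one.sub hC).eq] at h
  have hCpos := (posSemidef_of_hermitian_idem hC hC2).smul (Nat.zero_le (k - 2))
  have hexp : ∀ i, (1 - C) * (1 - A i - B i) * (1 - C)
      = (1 - C) - (1 - C) * A i * (1 - C) - B i := by
    intro i
    simp only [mul_sub, sub_mul, mul_one, one_mul, hC2, hBC, hCB, zero_mul]
    abel
  have hS : ∑ i, (1 - C) * (1 - A i - B i) * (1 - C)
      = (k : ℂ) • (1 - C) - (1 - C) - ∑ i, B i := by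
    simp only [hexp, Finset.sum_sub_distrib, ← Finset.sum_mul, ← Finset.mul_sum, hsum]
    simp [mul_sub, sub_mul, hC2, ← Nat.cast_smul_eq_nsmul ℂ, smul_sub]
  have h := (Matrix.posSemidef_sum Finset.univ fun i _ => hterm i).add hCpos
  convert h using 1
  rw [hS, hsum, ← Nat.cast_smul_eq_nsmul ℂ, Nat.cast_sub hk]
  push_cast
  module

theorem re_dotProduct_nonneg {k : ℕ} {M : Matrix (Fin k) (Fin k) ℂ} (h : M.PosSemidef)
    (ψ : Fin k → ℂ) : 0 ≤ (star ψ ⬝ᵥ M *ᵥ ψ).re :=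
  (Complex.le_def.1 (h.dotProduct_mulVec_nonneg ψ)).1

end

/-- Every `k`-dimensional quantum realisation of the `k`-Qite exclusivity graph
(a unit state `ψ ∈ ℂ^k` and nonzero orthogonal projections `P i` with `P i * P j = 0` for
adjacent `i, j`) satisfies `∑ i ⟨ψ, P i ψ⟩ ≤ k`. -/
theorem stmt_15 (k : ℕ) (hk : 2 ≤ k)
    (ψ : Fin k → ℂ) (hψ : ∑ i, ‖ψ i‖ ^ 2 = 1)
    (P : Fin (2 * k + 1) → Matrix (Fin k) (Fin k) ℂ)
    (hne : ∀ i, P i ≠ 0)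
    (hherm : ∀ i, (P i).IsHermitian)
    (hidem : ∀ i, P i * P i = P i)
    (horth : ∀ i j, (qite k).Adj i j → P i * P j = 0) :
    (∑ i : Fin (2 * k + 1), star ψ ⬝ᵥ (P i).mulVec ψ).re ≤ (k : ℝ) := by
  have adjA : ∀ i j : Fin k, i ≠ j → (qite k).Adj ⟨i, by omega⟩ ⟨j, by omega⟩ := by
    intro i j hij
    have : i.val ≠ j.val := fun h => hij (Fin.ext h)
    simp [qite, this]
  have adjB : ∀ i : Fin k, (qite k).Adj ⟨i, by omega⟩ ⟨i + k, by omega⟩ := by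
    intro i
    simp [qite]
    omega
  have adjC : ∀ i : Fin k, (qite k).Adj ⟨2 * k, by omega⟩ ⟨i + k, by omega⟩ := by
    intro i
    simp [qite]
    omega
  have hsum : ∑ i : Fin k, P ⟨i, by omega⟩ = 1 :=
    sum_eq_one_of_orthogonal (fun i : Fin k => P ⟨i, by omega⟩) (fun i => hne _)
      (fun i => hidem _) (fun i j hij => horth _ _ (adjA i j hij))
  have hpos := posSemidef_qite hk (fun i : Fin k => P ⟨i, by omega⟩)
    (fun i : Fin k => P ⟨i + k, by omega⟩) (P ⟨2 * k, by omega⟩)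
    (fun i => hherm _) (fun i => hherm _) (hherm _) (fun i => hidem _) (fun i => hidem _)
    (hidem _) hsum (fun i => horth _ _ (adjB i)) (fun i => horth _ _ (adjB i).symm)
    (fun i => horth _ _ (adjC i).symm) (fun i => horth _ _ (adjC i))
  rw [← sum_qite_split k P] at hpos
  have hnorm : star ψ ⬝ᵥ ψ = 1 := by
    have h : star ψ ⬝ᵥ ψ = ((∑ i, ‖ψ i‖ ^ 2 : ℝ) : ℂ) := by
      simp [dotProduct, Complex.conj_mul']
    rw [h, hψ, Complex.ofReal_one]
  have h := re_dotProduct_nonneg hpos ψ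
  rw [Matrix.sub_mulVec, dotProduct_sub, Matrix.smul_mulVec, Matrix.one_mulVec,
    dotProduct_smul, hnorm, Matrix.sum_mulVec, dotProduct_sum] at h
  simpa using h
end
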